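/- Let γ ≥ 2 and δ ≥ 1 be integers and let 𝒱 be a collection of subsets of a finite set U, each of size at most γ. Let Γ be the collection of all nonempty sets X ⊆ U that are the core of a (δ·γ^{|X|})-sunflower in 𝒱. Let 𝒲 ⊆ 𝒱 be a subcollection none of whose members contains a member of Γ as a subset. If 𝒲 contains at least (δ·γ^γ)^γ·γ! distinct sets, then 𝒲 contains δ·γ^γ pairwise disjoint sets. -/

import Mathlib

/-- `X` is the core of an `r`-sunflower in `𝒰`. -/
def IsSunflowerWithCore {α : Type} [DecidableEq α] (𝒰 : Set (Finset α)) (r : ℕ)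
    (X : Finset α) : Prop :=
  ∃ 𝒮 : Finset (Finset α), ↑𝒮 ⊆ 𝒰 ∧ 𝒮.card = r ∧
    ∀ A ∈ 𝒮, ∀ B ∈ 𝒮, A ≠ B → A ∩ B = X

/-- `Γ`: the collection of all nonempty sets `X` that are the core of a
`(δ·γ^{|X|})`-sunflower in `𝒱`. -/
def GammaColl {α : Type} [DecidableEq α] (𝒱 : Set (Finset α)) (γ δ : ℕ) :
    Set (Finset α) :=
  {X | X.Nonempty ∧ IsSunflowerWithCore 𝒱 (δ * γ ^ X.card) X}

/-!
The argument is the Erdős–Rado sunflower lemma followed by one observation. A family of more than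
`m ^ k * k!` sets of size at most `k` either has `m + 1` pairwise disjoint members or has an element
lying in many members; removing that element and inducting on `k` yields a sunflower with `m + 1`
petals. Taking `m + 1 = δ * γ ^ γ`, a nonempty core `X` of such a sunflower in `𝒲` has at most `γ`
elements, so discarding all but `δ * γ ^ #X` petals exhibits `X` as a member of `Γ` contained in a
member of `𝒲`. Hence the core is empty and the petals are pairwise disjoint.
-/

open Finset
open scoped Nat

section Sunflower

variable {α : Type*} [DecidableEq α]

/-- A finite family `𝒮` is a sunflower with core `X` if any two distinct members meet exactly in
`X`. This is the condition inside `IsSunflowerWithCore`, without the ambient family and the number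
of petals; a family with at most one member is a sunflower with every core. -/
def IsSunflower (𝒮 : Finset (Finset α)) (X : Finset α) : Prop :=
  (𝒮 : Set (Finset α)).Pairwise fun A B => A ∩ B = X

theorem isSunflower_empty_iff {𝒮 : Finset (Finset α)} :
    IsSunflower 𝒮 ∅ ↔ (𝒮 : Set (Finset α)).Pairwise Disjoint := by
  simp only [IsSunflower, Set.Pairwise, disjoint_iff_inter_eq_empty]

theorem IsSunflower.image_insert {𝒮 : Finset (Finset α)} {X : Finset α}
    (h : IsSunflower 𝒮 X) (y : α) : IsSunflower (𝒮.image (insert y)) (insert y X) := by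
  rw [IsSunflower, coe_image]
  rintro _ ⟨A, hA, rfl⟩ _ ⟨B, hB, rfl⟩ hAB
  rw [← insert_inter_distrib, h hA hB (ne_of_apply_ne _ hAB)]

theorem exists_maximal_pairwise_subset {ι : Type*} (r : ι → ι → Prop) [Std.Symm r] (s : Finset ι) :
    ∃ t ⊆ s, (t : Set ι).Pairwise r ∧ ∀ b ∈ s, ∃ a ∈ t, b = a ∨ ¬ r a b := by
  classical
  have hfin : {t : Finset ι | t ⊆ s ∧ (t : Set ι).Pairwise r}.Finite :=
    s.powerset.finite_toSet.subset fun t ht => mem_coe.2 (mem_powerset.2 ht.1)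
  obtain ⟨t, ⟨hts, htr⟩, hmax⟩ := hfin.exists_maximal ⟨∅, by simp⟩
  refine ⟨t, hts, htr, fun b hb => ?_⟩
  by_contra! hbt
  have hins : (↑(insert b t) : Set ι).Pairwise r := by
    rw [coe_insert, Set.pairwise_insert_of_symm]
    exact ⟨htr, fun a ha _ => symm (hbt a ha).2⟩
  have hbmem : b ∈ t :=
    hmax ⟨insert_subset hb hts, hins⟩ (subset_insert b t) (mem_insert_self b t)
  exact (hbt b hbmem).1 rfl

theorem card_filter_mem_le_card_memberSubfamily (𝒜 : Finset (Finset α)) (y : α) :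
    #{B ∈ 𝒜 | y ∈ B} ≤ #(𝒜.memberSubfamily y) := by
  rw [← image_insert_memberSubfamily]
  exact card_image_le

-- The maximum with `1` accounts for `A = ∅`, which is disjoint from everything, itself included.
theorem card_filter_eq_or_not_disjoint_le {𝒜 : Finset (Finset α)} {M : ℕ} (A : Finset α)
    (hM : ∀ y ∈ A, #(𝒜.memberSubfamily y) ≤ M) :
    #{B ∈ 𝒜 | B = A ∨ ¬ Disjoint A B} ≤ max 1 (#A * M) := by
  obtain rfl | hA := A.eq_empty_or_nonempty
  · refine le_max_of_le_left (card_le_one_iff_subset_singleton.2 ⟨∅, fun B hB => ?_⟩)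
    simpa using (mem_filter.1 hB).2
  · have hcover : {B ∈ 𝒜 | B = A ∨ ¬ Disjoint A B} ⊆ A.biUnion fun y => {B ∈ 𝒜 | y ∈ B} := by
      intro B hB
      obtain ⟨hB𝒜, hBA⟩ := mem_filter.1 hB
      obtain ⟨y, hyA, hyB⟩ : ∃ y ∈ A, y ∈ B := by
        obtain rfl | hBA := hBA
        · exact hA.imp fun y hy => ⟨hy, hy⟩
        · exact not_disjoint_iff.1 hBA
      exact mem_biUnion.2 ⟨y, hyA, mem_filter.2 ⟨hB𝒜, hyB⟩⟩
    exact le_max_of_le_right <| (card_le_card hcover).trans <| card_biUnion_le_card_mul _ _ _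
      fun y hy => (card_filter_mem_le_card_memberSubfamily 𝒜 y).trans (hM y hy)

theorem exists_pairwise_disjoint_or_lt_card_memberSubfamily {𝒜 : Finset (Finset α)} {k m M : ℕ}
    (h𝒜 : ∀ A ∈ 𝒜, #A ≤ k) (hcard : m * max 1 (k * M) < #𝒜) :
    (∃ 𝒟 ⊆ 𝒜, #𝒟 = m + 1 ∧ (𝒟 : Set (Finset α)).Pairwise Disjoint) ∨
      ∃ y, M < #(𝒜.memberSubfamily y) := by
  obtain ⟨𝒟, h𝒟𝒜, h𝒟, hmax⟩ := exists_maximal_pairwise_subset Disjoint 𝒜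
  by_contra! ⟨hno, hM⟩
  have h𝒟m : #𝒟 ≤ m := by
    by_contra! hlt
    obtain ⟨𝒯, h𝒯𝒟, h𝒯⟩ := exists_subset_card_eq (Nat.succ_le_of_lt hlt)
    exact hno 𝒯 (h𝒯𝒟.trans h𝒟𝒜) h𝒯 (h𝒟.mono (coe_subset.2 h𝒯𝒟))
  have hcover : 𝒜 ⊆ 𝒟.biUnion fun A => {B ∈ 𝒜 | B = A ∨ ¬ Disjoint A B} := by
    intro B hB
    obtain ⟨A, hA, hBA⟩ := hmax B hB
    exact mem_biUnion.2 ⟨A, hA, mem_filter.2 ⟨hB, hBA⟩⟩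
  have hnbhd : ∀ A ∈ 𝒟, #{B ∈ 𝒜 | B = A ∨ ¬ Disjoint A B} ≤ max 1 (k * M) := fun A hA =>
    (card_filter_eq_or_not_disjoint_le A fun y _ => hM y).trans <|
      max_le_max_left 1 (Nat.mul_le_mul_right M (h𝒜 A (h𝒟𝒜 hA)))
  refine hcard.not_ge ?_
  calc #𝒜 ≤ #𝒟 * max 1 (k * M) :=
        (card_le_card hcover).trans (card_biUnion_le_card_mul _ _ _ hnbhd)
    _ ≤ m * max 1 (k * M) := Nat.mul_le_mul_right _ h𝒟m

theorem mul_max_one_mul_factorial_le (m k : ℕ) :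
    m * max 1 ((k + 1) * (m ^ k * k !)) ≤ m ^ (k + 1) * (k + 1)! := by
  obtain rfl | hm := m.eq_zero_or_pos
  · simp
  · have hpos : 1 ≤ (k + 1) * (m ^ k * k !) := Nat.succ_le_of_lt (by positivity)
    rw [max_eq_right hpos, Nat.factorial_succ]
    exact (by ring : _ = _).le

theorem card_le_of_mem_memberSubfamily {𝒜 : Finset (Finset α)} {k : ℕ}
    (h𝒜 : ∀ A ∈ 𝒜, #A ≤ k + 1) {y : α} {A : Finset α} (hA : A ∈ 𝒜.memberSubfamily y) :
    #A ≤ k := by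
  obtain ⟨hins, hy⟩ := mem_memberSubfamily.1 hA
  simpa [card_insert_of_notMem hy] using h𝒜 _ hins

theorem exists_isSunflower_of_memberSubfamily {𝒜 𝒮 : Finset (Finset α)} {X : Finset α} {y : α}
    (h𝒮 : 𝒮 ⊆ 𝒜.memberSubfamily y) (hX : IsSunflower 𝒮 X) :
    ∃ 𝒯 ⊆ 𝒜, #𝒯 = #𝒮 ∧ IsSunflower 𝒯 (insert y X) := by
  have hmem : ∀ A ∈ 𝒮, insert y A ∈ 𝒜 ∧ y ∉ A := fun A hA => mem_memberSubfamily.1 (h𝒮 hA)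
  refine ⟨𝒮.image (insert y), image_subset_iff.2 fun A hA => (hmem A hA).1, ?_, hX.image_insert y⟩
  exact card_image_of_injOn <| insert_erase_invOn.2.injOn.mono fun A hA => (hmem A hA).2

theorem exists_isSunflower_of_lt_card (m : ℕ) {k : ℕ} {𝒜 : Finset (Finset α)}
    (h𝒜 : ∀ A ∈ 𝒜, #A ≤ k) (hcard : m ^ k * k ! < #𝒜) :
    ∃ 𝒮 ⊆ 𝒜, #𝒮 = m + 1 ∧ ∃ X, IsSunflower 𝒮 X := by
  induction k generalizing 𝒜 with
  | zero =>
    have h𝒜_le : #𝒜 ≤ 1 :=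
      card_le_one_iff_subset_singleton.2 ⟨∅, fun A hA => by simpa using h𝒜 A hA⟩
    simp only [pow_zero, Nat.factorial_zero, mul_one] at hcard
    omega
  | succ k ih =>
    obtain ⟨𝒟, h𝒟𝒜, h𝒟m, h𝒟⟩ | ⟨y, hy⟩ := exists_pairwise_disjoint_or_lt_card_memberSubfamily
      h𝒜 ((mul_max_one_mul_factorial_le m k).trans_lt hcard)
    · exact ⟨𝒟, h𝒟𝒜, h𝒟m, ∅, isSunflower_empty_iff.2 h𝒟⟩
    · obtain ⟨𝒮, h𝒮, h𝒮m, X, hX⟩ := ih (fun A hA => card_le_of_mem_memberSubfamily h𝒜 hA) hy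
      obtain ⟨𝒯, h𝒯𝒜, h𝒯, hyX⟩ := exists_isSunflower_of_memberSubfamily h𝒮 hX
      exact ⟨𝒯, h𝒯𝒜, h𝒯.trans h𝒮m, insert y X, hyX⟩

end Sunflower

section GammaColl

variable {α : Type} [DecidableEq α] {𝒱 : Set (Finset α)} {𝒮 : Finset (Finset α)}
  {X : Finset α} {γ δ : ℕ}

theorem IsSunflower.mem_gammaColl (h : IsSunflower 𝒮 X) (h𝒮 : ↑𝒮 ⊆ 𝒱) (hX : X.Nonempty)
    (hcard : δ * γ ^ #X ≤ #𝒮) : X ∈ GammaColl 𝒱 γ δ := by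
  obtain ⟨𝒯, h𝒯𝒮, h𝒯⟩ := exists_subset_card_eq hcard
  exact ⟨hX, 𝒯, (coe_subset.2 h𝒯𝒮).trans h𝒮, h𝒯,
    fun A hA B hB hAB => h (h𝒯𝒮 hA) (h𝒯𝒮 hB) hAB⟩

theorem IsSunflower.pairwise_disjoint_of_not_gammaColl_subset (h : IsSunflower 𝒮 X) (hγ : γ ≠ 0)
    (h𝒮 : ↑𝒮 ⊆ 𝒱) (hsize : ∀ A ∈ 𝒮, #A ≤ γ) (hcard : δ * γ ^ γ ≤ #𝒮)
    (hout : ∀ A ∈ 𝒮, ∀ Y ∈ GammaColl 𝒱 γ δ, ¬ Y ⊆ A) :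
    (𝒮 : Set (Finset α)).Pairwise Disjoint := by
  intro A hA B hB hAB
  have hX : A ∩ B = X := h hA hB hAB
  have hXA : X ⊆ A := hX ▸ inter_subset_left
  have hXγ : #X ≤ γ := (card_le_card hXA).trans (hsize A hA)
  rw [disjoint_iff_inter_eq_empty, hX]
  by_contra! hne
  have hXcard : δ * γ ^ #X ≤ #𝒮 :=
    (Nat.mul_le_mul_left δ (Nat.pow_le_pow_right (Nat.pos_of_ne_zero hγ) hXγ)).trans hcard
  exact hout A hA X (h.mem_gammaColl h𝒮 hne hXcard) hXA

end GammaColl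

theorem stmt13_general {α : Type} [DecidableEq α] (γ δ : ℕ) (hγ : γ ≠ 0)
    (𝒱 𝒲 : Set (Finset α)) (hsize : ∀ W ∈ 𝒲, #W ≤ γ) (h𝒲 : 𝒲 ⊆ 𝒱)
    (hout : ∀ W ∈ 𝒲, ∀ X ∈ GammaColl 𝒱 γ δ, ¬ X ⊆ W)
    (hbig : ((δ * γ ^ γ) ^ γ * γ ! : ℕ) ≤ 𝒲.encard) :
    ∃ 𝒟 : Finset (Finset α), ↑𝒟 ⊆ 𝒲 ∧ #𝒟 = δ * γ ^ γ ∧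
      ∀ A ∈ 𝒟, ∀ B ∈ 𝒟, A ≠ B → Disjoint A B := by
  obtain ⟨ℱ, hℱ𝒲, hℱ⟩ : ∃ ℱ : Finset (Finset α), ↑ℱ ⊆ 𝒲 ∧ #ℱ = (δ * γ ^ γ) ^ γ * γ ! := by
    obtain ⟨t, ht𝒲, ht⟩ := Set.exists_subset_encard_eq hbig
    lift t to Finset (Finset α) using Set.finite_of_encard_eq_coe ht
    exact ⟨t, ht𝒲, by simpa only [Set.encard_coe_eq_coe_finsetCard, Nat.cast_inj] using ht⟩
  obtain hr | ⟨m, hm⟩ : δ * γ ^ γ = 0 ∨ ∃ m, δ * γ ^ γ = m + 1 :=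
    (Nat.eq_zero_or_pos _).imp_right Nat.exists_eq_add_one.2
  · exact ⟨∅, by simp, by simp [hr], by simp⟩
  have hlt : m ^ γ * γ ! < #ℱ := by
    rw [hℱ, hm]
    gcongr
    exact m.lt_succ_self
  obtain ⟨𝒮, h𝒮ℱ, h𝒮m, X, hX⟩ :=
    exists_isSunflower_of_lt_card m (fun A hA => hsize A (hℱ𝒲 hA)) hlt
  have h𝒮𝒲 : ↑𝒮 ⊆ 𝒲 := (coe_subset.2 h𝒮ℱ).trans hℱ𝒲
  have hdisj : (𝒮 : Set (Finset α)).Pairwise Disjoint :=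
    hX.pairwise_disjoint_of_not_gammaColl_subset hγ (h𝒮𝒲.trans h𝒲)
      (fun A hA => hsize A (h𝒮𝒲 hA)) (hm.trans h𝒮m.symm).le fun A hA => hout A (h𝒮𝒲 hA)
  exact ⟨𝒮, h𝒮𝒲, h𝒮m.trans hm.symm, fun A hA B hB => hdisj hA hB⟩

/-- let `γ ≥ 2`, `δ ≥ 1`, let `𝒱` consist of sets of size at most
`γ`, and let `𝒲 ⊆ 𝒱` be a subcollection none of whose members contains a member
of `Γ`.  If `𝒲` has at least `(δ·γ^γ)^γ·γ!` members, then `𝒲` contains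
`δ·γ^γ` pairwise disjoint sets. -/
theorem stmt13 {α : Type} [Fintype α] [DecidableEq α]
    (γ δ : ℕ) (hγ : 2 ≤ γ) (hδ : 1 ≤ δ)
    (𝒱 : Set (Finset α)) (hsize : ∀ V ∈ 𝒱, V.card ≤ γ)
    (𝒲 : Set (Finset α)) (h𝒲 : 𝒲 ⊆ 𝒱)
    (hout : ∀ W ∈ 𝒲, ∀ X ∈ GammaColl 𝒱 γ δ, ¬ X ⊆ W)
    (hbig : (δ * γ ^ γ) ^ γ * Nat.factorial γ ≤ 𝒲.ncard) :
    ∃ 𝒟 : Finset (Finset α), ↑𝒟 ⊆ 𝒲 ∧ 𝒟.card = δ * γ ^ γ ∧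
      ∀ A ∈ 𝒟, ∀ B ∈ 𝒟, A ≠ B → Disjoint A B :=
  stmt13_general γ δ (by omega) 𝒱 𝒲 (fun W hW => hsize W (h𝒲 hW)) h𝒲 hout
    (by rw [← 𝒲.toFinite.cast_ncard_eq]; exact_mod_cast hbig)
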